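/- Let 1 < p ≤ 2. There exists a constant C = C(p) > 0 such that for all complex numbers z and c one has | |z+c|^{p−2}(z+c) − |z|^{p−2} z | ≤ C · |c|^{p−1}, where by convention |w|^{p−2} w is understood to equal 0 when w = 0. -/

import Mathlib

/-!
By symmetry let `‖y‖ ≤ ‖x‖`, and put `r = p - 2 ∈ [-1, 0]`. Split
`‖x‖ ^ r • x - ‖y‖ ^ r • y = ‖x‖ ^ r • (x - y) + (‖x‖ ^ r - ‖y‖ ^ r) • y`.
Because `t ↦ t ^ r` decreases while `t ↦ t ^ (r + 1)` increases, the second summand is no larger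
than the bound `‖x‖ ^ r * ‖x - y‖` of the first. Finally `‖x - y‖ ≤ 2 * ‖x‖`, so the negative
power of `‖x‖` is controlled by that of `‖x - y‖`.
-/

theorem rpow_mul_le_of_le_mul {r d k s : ℝ} (hr : r ≤ 0) (hd : 0 ≤ d) (hk : 0 < k)
    (hds : d ≤ k * s) : s ^ r * d ≤ k ^ (-r) * d ^ (r + 1) := by
  obtain rfl | hd_pos := hd.eq_or_lt
  · rw [mul_zero]
    positivity
  calc
    s ^ r * d ≤ (d / k) ^ r * d := by
      gcongr ?_ * d
      exact Real.rpow_le_rpow_of_nonpos (by positivity) ((div_le_iff₀' hk).2 hds) hr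
    _ = k ^ (-r) * d ^ (r + 1) := by
      rw [Real.div_rpow hd hk.le, Real.rpow_neg hk.le, Real.rpow_add_one hd_pos.ne']
      ring

theorem abs_rpow_sub_rpow_mul_le {r s t : ℝ} (hr₁ : -1 ≤ r) (hr₀ : r ≤ 0) (ht : 0 ≤ t)
    (hts : t ≤ s) : |s ^ r - t ^ r| * t ≤ s ^ r * (s - t) := by
  obtain rfl | ht_pos := ht.eq_or_lt
  · rw [mul_zero, sub_zero]
    positivity
  have rpow_le : s ^ r ≤ t ^ r := Real.rpow_le_rpow_of_nonpos ht_pos hts hr₀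
  have rpow_mul_self_le : t ^ r * t ≤ s ^ r * s := by
    rw [← Real.rpow_add_one ht_pos.ne', ← Real.rpow_add_one (ht_pos.trans_le hts).ne']
    exact Real.rpow_le_rpow ht hts (by linarith)
  rw [abs_of_nonpos (sub_nonpos.2 rpow_le)]
  linarith

section SeminormedSpace

variable {E : Type*} [SeminormedAddCommGroup E] [NormedSpace ℝ E]

theorem norm_rpow_smul_sub_rpow_smul_le {r : ℝ} (hr₁ : -1 ≤ r) (hr₀ : r ≤ 0) {x y : E}
    (hyx : ‖y‖ ≤ ‖x‖) :
    ‖‖x‖ ^ r • x - ‖y‖ ^ r • y‖ ≤ 2 * (‖x‖ ^ r * ‖x - y‖) := by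
  have first_summand : ‖‖x‖ ^ r • (x - y)‖ = ‖x‖ ^ r * ‖x - y‖ :=
    norm_smul_of_nonneg (by positivity) _
  have second_summand : ‖(‖x‖ ^ r - ‖y‖ ^ r) • y‖ ≤ ‖x‖ ^ r * ‖x - y‖ :=
    calc
      ‖(‖x‖ ^ r - ‖y‖ ^ r) • y‖ = |‖x‖ ^ r - ‖y‖ ^ r| * ‖y‖ := norm_smul _ _
      _ ≤ ‖x‖ ^ r * (‖x‖ - ‖y‖) := abs_rpow_sub_rpow_mul_le hr₁ hr₀ (norm_nonneg y) hyx
      _ ≤ ‖x‖ ^ r * ‖x - y‖ := by gcongr; exact norm_sub_norm_le x y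
  calc
    ‖‖x‖ ^ r • x - ‖y‖ ^ r • y‖ = ‖‖x‖ ^ r • (x - y) + (‖x‖ ^ r - ‖y‖ ^ r) • y‖ := by
      congr 1
      module
    _ ≤ ‖‖x‖ ^ r • (x - y)‖ + ‖(‖x‖ ^ r - ‖y‖ ^ r) • y‖ := norm_add_le _ _
    _ ≤ 2 * (‖x‖ ^ r * ‖x - y‖) := by linarith

theorem gradient_bound_general {p : ℝ} (hp1 : 1 ≤ p) (hp2 : p ≤ 2) (x y : E) :
    ‖‖x‖ ^ (p - 2) • x - ‖y‖ ^ (p - 2) • y‖ ≤ 2 ^ (3 - p) * ‖x - y‖ ^ (p - 1) := by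
  wlog hyx : ‖y‖ ≤ ‖x‖ generalizing x y
  · rw [norm_sub_rev, norm_sub_rev x]
    exact this y x (le_of_not_ge hyx)
  have norm_sub_le_two_mul : ‖x - y‖ ≤ 2 * ‖x‖ := by linarith [norm_sub_le x y]
  calc
    ‖‖x‖ ^ (p - 2) • x - ‖y‖ ^ (p - 2) • y‖
      ≤ 2 * (‖x‖ ^ (p - 2) * ‖x - y‖) :=
        norm_rpow_smul_sub_rpow_smul_le (by linarith) (by linarith) hyx
    _ ≤ 2 * (2 ^ (-(p - 2)) * ‖x - y‖ ^ (p - 2 + 1)) := by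
        gcongr 2 * ?_
        exact rpow_mul_le_of_le_mul (by linarith) (norm_nonneg _) two_pos norm_sub_le_two_mul
    _ = 2 ^ (3 - p) * ‖x - y‖ ^ (p - 1) := by
        rw [← mul_assoc, ← Real.rpow_one_add' zero_le_two (by linarith)]
        ring_nf

end SeminormedSpace

/-- For `1 < p ≤ 2` there is `C = C(p) > 0` such that for all complex `z c`,
`| |z+c|^{p−2}(z+c) − |z|^{p−2} z | ≤ C |c|^{p−1}`. (Note that the expression
`(‖w‖ ^ (p - 2) : ℝ) * w` vanishes automatically when `w = 0`.) -/
theorem gradient_bound (p : ℝ) (hp1 : 1 < p) (hp2 : p ≤ 2) :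
    ∃ C : ℝ, 0 < C ∧ ∀ z c : ℂ,
      ‖(↑(‖z + c‖ ^ (p - 2)) : ℂ) * (z + c) - (↑(‖z‖ ^ (p - 2)) : ℂ) * z‖
        ≤ C * ‖c‖ ^ (p - 1) := by
  refine ⟨2 ^ (3 - p), by positivity, fun z c => ?_⟩
  simpa only [Complex.real_smul, add_sub_cancel_left] using
    gradient_bound_general hp1.le hp2 (z + c) z
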